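/- Fix b ∈ (0,1), q ∈ (0,1) and κ > 1, and set β = b/(1−b), χ = b(1−b), Λ = b + κ(1−b), θ = κ^{−1}Λ², F_V = Λ^{−1/3}(κ−1)^{1/3}χ^{2/3}. Then for every u ∈ ℝ, the argument qβ(1 + F_V^{−1}T^{−1/3}u) is positive for all sufficiently large T > 0, and lim_{T→∞} T·( Ω_V( qβ(1 + F_V^{−1}T^{−1/3}u) ) − Ω_V(qβ) ) = u³/3. (This cubic rescaling limit at the double critical point qβ is the content of the K = V case of displays (6.8) and (7.28): qβ is a critical point of Ω_V with vanishing second derivative and (qβ)³Ω_V‴(qβ) = 2F_V³.) -/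

import Mathlib

open Real Filter

/-- The function `Ω_V` of equation (6.5):
`Ω_V(z) = θ·log(κ^{−1}z+q) − log(z+q) + b²(1−κ^{−1})·log z`, where `Λ = b + κ(1−b)` and
`θ = κ^{−1}Λ²`. -/
noncomputable def OmegaV (b q κ z : ℝ) : ℝ :=
  (κ⁻¹ * (b + κ * (1 - b)) ^ 2) * Real.log (κ⁻¹ * z + q) - Real.log (z + q)
    + b ^ 2 * (1 - κ⁻¹) * Real.log z

/-!
Write `z = qβ(1 + w)`. Each of the three logarithms in `Ω_V(z) - Ω_V(qβ)` is then exactly of the form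
`log (1 + k w)`, with `k = b/Λ`, `b` and `1` and weights `θ`, `-1` and `b²(1 - κ⁻¹)` respectively
(`OmegaV_sub`). The weighted sums of `k` and of `k²` vanish, which is the double criticality of `qβ`,
and the weighted sum of `k³` is `(κ - 1) χ² / Λ = F_V³`. With `w = F_V⁻¹ T^(-1/3) u` the linear and
quadratic terms of the logarithms therefore cancel, and
`T (log (1 + a T^(-1/3)) - a T^(-1/3) + (a T^(-1/3))² / 2) → a³ / 3` (`tendsto_log_cubic`) gives the
limit `F_V³ (F_V⁻¹ u)³ / 3 = u³ / 3`.
-/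

lemma tendsto_rpow_neg_third : Tendsto (fun T : ℝ => T ^ (-(1 : ℝ) / 3)) atTop (nhds 0) := by
  have h := tendsto_rpow_neg_atTop (y := (1 : ℝ) / 3) (by norm_num)
  simpa only [neg_div] using h

/-- Third-order Taylor expansion of `log (1 + x)` with a quantitative remainder. -/
lemma log_cubic_bound {x : ℝ} (hx : |x| ≤ 1 / 2) :
    |Real.log (1 + x) - x + x ^ 2 / 2 - x ^ 3 / 3| ≤ 2 * x ^ 4 := by
  have h := Real.abs_log_sub_add_sum_range_le (x := -x) (by rw [abs_neg]; linarith) 3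
  have e : (∑ i ∈ Finset.range 3, (-x) ^ (i + 1) / ((i : ℝ) + 1)) + Real.log (1 - -x)
      = Real.log (1 + x) - x + x ^ 2 / 2 - x ^ 3 / 3 := by
    simp only [Finset.sum_range_succ, Finset.sum_range_zero, sub_neg_eq_add]
    push_cast
    ring
  rw [e, abs_neg] at h
  refine h.trans ?_
  rw [div_le_iff₀ (by linarith), show |x| ^ (3 + 1) = x ^ 4 from Even.pow_abs (by decide) x]
  nlinarith [show 0 ≤ x ^ 4 by positivity]

lemma tendsto_log_cubic (a : ℝ) :
    Tendsto (fun T : ℝ => T * (Real.log (1 + a * T ^ (-(1 : ℝ) / 3)) - a * T ^ (-(1 : ℝ) / 3)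
      + (a * T ^ (-(1 : ℝ) / 3)) ^ 2 / 2)) atTop (nhds (a ^ 3 / 3)) := by
  have hs := tendsto_rpow_neg_third
  have hw : Tendsto (fun T : ℝ => |a * T ^ (-(1 : ℝ) / 3)|) atTop (nhds 0) := by
    simpa using (hs.const_mul a).abs
  rw [tendsto_iff_norm_sub_tendsto_zero]
  have hb : Tendsto (fun T : ℝ => 2 * a ^ 4 * T ^ (-(1 : ℝ) / 3)) atTop (nhds 0) := by
    simpa using hs.const_mul (2 * a ^ 4)
  refine squeeze_zero' (Eventually.of_forall fun _ => norm_nonneg _) ?_ hb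
  filter_upwards [eventually_gt_atTop 0, hw.eventually_le_const (by norm_num : (0 : ℝ) < 1 / 2)]
    with T hT hsmall
  have hT3 : T * (T ^ (-(1 : ℝ) / 3)) ^ 3 = 1 := by
    rw [← Real.rpow_mul_natCast hT.le]
    norm_num [Real.rpow_neg_one, hT.ne']
  have hbd := log_cubic_bound hsmall
  generalize T ^ (-(1 : ℝ) / 3) = s at *
  have e : T * (Real.log (1 + a * s) - a * s + (a * s) ^ 2 / 2) - a ^ 3 / 3
      = T * (Real.log (1 + a * s) - a * s + (a * s) ^ 2 / 2 - (a * s) ^ 3 / 3) := by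
    linear_combination (a ^ 3 / 3) * hT3
  rw [e, Real.norm_eq_abs, abs_mul, abs_of_pos hT]
  calc _ ≤ T * (2 * (a * s) ^ 4) := by gcongr
    _ = 2 * a ^ 4 * s := by linear_combination (2 * a ^ 4 * s) * hT3

/-- The condition `|w| < 1` keeps all three logarithms at positive arguments. -/
lemma OmegaV_sub {b q κ w : ℝ} (hb0 : 0 < b) (hb1 : b < 1) (hq : 0 < q) (hκ : 1 < κ)
    (hw : |w| < 1) :
    OmegaV b q κ (q * (b / (1 - b)) * (1 + w)) - OmegaV b q κ (q * (b / (1 - b)))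
      = (κ⁻¹ * (b + κ * (1 - b)) ^ 2) * Real.log (1 + b / (b + κ * (1 - b)) * w)
        - Real.log (1 + b * w) + b ^ 2 * (1 - κ⁻¹) * Real.log (1 + w) := by
  have hκ0 : 0 < κ := by linarith
  have h1b : 0 < 1 - b := by linarith
  have hL : 0 < b + κ * (1 - b) := by positivity
  obtain ⟨hw1, hw2⟩ := abs_lt.mp hw
  have p2 : 0 < 1 + b * w := by nlinarith
  have p1 : 0 < 1 + b / (b + κ * (1 - b)) * w := by
    have : 0 < (b + κ * (1 - b) + b * w) / (b + κ * (1 - b)) := by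
      have := mul_pos hκ0 h1b
      apply div_pos _ hL
      nlinarith
    convert this using 1
    field_simp
  have e1 : κ⁻¹ * (q * (b / (1 - b)) * (1 + w)) + q
      = (κ⁻¹ * (q * (b / (1 - b))) + q) * (1 + b / (b + κ * (1 - b)) * w) := by
    field_simp
    ring
  have e2 : q * (b / (1 - b)) * (1 + w) + q = (q * (b / (1 - b)) + q) * (1 + b * w) := by
    field_simp
    ring
  unfold OmegaV
  rw [e1, e2, Real.log_mul (by positivity) p1.ne', Real.log_mul (by positivity) p2.ne',
    Real.log_mul (by positivity) (by linarith)]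
  ring

/-- The cube of `F_V`, free of fractional powers. -/
lemma FV_cube {b κ : ℝ} (hb0 : 0 < b) (hb1 : b < 1) (hκ : 1 < κ) :
    ((b + κ * (1 - b)) ^ (-(1 : ℝ) / 3) * (κ - 1) ^ ((1 : ℝ) / 3)
      * (b * (1 - b)) ^ ((2 : ℝ) / 3)) ^ 3
      = (b + κ * (1 - b))⁻¹ * (κ - 1) * (b * (1 - b)) ^ 2 := by
  have hκ0 : 0 < κ := by linarith
  have h1b : 0 < 1 - b := by linarith
  have hL : 0 < b + κ * (1 - b) := by positivity
  have hk : 0 < κ - 1 := by linarith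
  have hc : 0 < b * (1 - b) := by positivity
  rw [mul_pow, mul_pow, ← Real.rpow_mul_natCast hL.le, ← Real.rpow_mul_natCast hk.le,
    ← Real.rpow_mul_natCast hc.le]
  norm_num [Real.rpow_neg_one]

/-- Cubic rescaling limit at the double critical point `qβ` (the `K = V` case of displays
(6.8) and (7.28)): with `β = b/(1−b)`, `χ = b(1−b)`, `Λ = b + κ(1−b)` and
`F_V = Λ^{−1/3}(κ−1)^{1/3}χ^{2/3}`, for every `u ∈ ℝ` the argument
`qβ(1 + F_V^{−1}T^{−1/3}u)` is positive for all sufficiently large `T > 0`, and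
`lim_{T→∞} T·(Ω_V(qβ(1 + F_V^{−1}T^{−1/3}u)) − Ω_V(qβ)) = u³/3`. -/
theorem stmt9 (b q κ : ℝ) (hb : b ∈ Set.Ioo (0 : ℝ) 1) (hq : q ∈ Set.Ioo (0 : ℝ) 1)
    (hκ : 1 < κ) (u : ℝ) :
    (∃ T₀ : ℝ, 0 < T₀ ∧ ∀ T : ℝ, T₀ ≤ T →
      0 < q * (b / (1 - b))
          * (1 + ((b + κ * (1 - b)) ^ (-(1 : ℝ) / 3) * (κ - 1) ^ ((1 : ℝ) / 3)
                  * (b * (1 - b)) ^ ((2 : ℝ) / 3))⁻¹ * T ^ (-(1 : ℝ) / 3) * u)) ∧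
    Tendsto
      (fun T : ℝ =>
        T * (OmegaV b q κ (q * (b / (1 - b))
                * (1 + ((b + κ * (1 - b)) ^ (-(1 : ℝ) / 3) * (κ - 1) ^ ((1 : ℝ) / 3)
                        * (b * (1 - b)) ^ ((2 : ℝ) / 3))⁻¹ * T ^ (-(1 : ℝ) / 3) * u))
            - OmegaV b q κ (q * (b / (1 - b)))))
      atTop (nhds (u ^ 3 / 3)) := by
  obtain ⟨hb0, hb1⟩ := hb
  have hq0 := hq.1
  have hκ0 : 0 < κ := by linarith
  have h1b : 0 < 1 - b := by linarith
  have hL : 0 < b + κ * (1 - b) := by positivity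
  have hk : 0 < κ - 1 := by linarith
  have hF : 0 < (b + κ * (1 - b)) ^ (-(1 : ℝ) / 3) * (κ - 1) ^ ((1 : ℝ) / 3)
      * (b * (1 - b)) ^ ((2 : ℝ) / 3) := by positivity
  have hF3 := FV_cube hb0 hb1 hκ
  generalize (b + κ * (1 - b)) ^ (-(1 : ℝ) / 3) * (κ - 1) ^ ((1 : ℝ) / 3)
      * (b * (1 - b)) ^ ((2 : ℝ) / 3) = F at *
  have hw : Tendsto (fun T : ℝ => |F⁻¹ * T ^ (-(1 : ℝ) / 3) * u|) atTop (nhds 0) := by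
    simpa using ((tendsto_rpow_neg_third.const_mul F⁻¹).mul_const u).abs
  have hev := hw.eventually_lt_const one_pos
  constructor
  · obtain ⟨T₁, hT₁⟩ := eventually_atTop.mp hev
    refine ⟨max T₁ 1, by positivity, fun T hT => ?_⟩
    have := (abs_lt.mp (hT₁ T (le_of_max_le_left hT))).1
    exact mul_pos (by positivity) (by linarith)
  · have h := (((tendsto_log_cubic (b / (b + κ * (1 - b)) * (F⁻¹ * u))).const_mul
      (κ⁻¹ * (b + κ * (1 - b)) ^ 2)).sub (tendsto_log_cubic (b * (F⁻¹ * u)))).add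
      ((tendsto_log_cubic (F⁻¹ * u)).const_mul (b ^ 2 * (1 - κ⁻¹)))
    -- The weighted third powers add up to `F ^ 3`.
    have hcube : (κ⁻¹ * (b + κ * (1 - b)) ^ 2) * (b / (b + κ * (1 - b))) ^ 3 - b ^ 3
        + b ^ 2 * (1 - κ⁻¹) = F ^ 3 := by
      rw [hF3]
      field_simp
      ring
    -- The weighted first and second powers cancel: `qβ` is a double critical point.
    have hlin : (κ⁻¹ * (b + κ * (1 - b)) ^ 2) * (b / (b + κ * (1 - b))) - b
        + b ^ 2 * (1 - κ⁻¹) = 0 := by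
      field_simp
      ring
    have hquad : (κ⁻¹ * (b + κ * (1 - b)) ^ 2) * (b / (b + κ * (1 - b))) ^ 2 - b ^ 2
        + b ^ 2 * (1 - κ⁻¹) = 0 := by
      field_simp
      ring
    have hFi : F ^ 3 * (F⁻¹) ^ 3 = 1 := by
      field_simp
    have hlim : u ^ 3 / 3 = (κ⁻¹ * (b + κ * (1 - b)) ^ 2)
          * ((b / (b + κ * (1 - b)) * (F⁻¹ * u)) ^ 3 / 3) - (b * (F⁻¹ * u)) ^ 3 / 3
          + b ^ 2 * (1 - κ⁻¹) * ((F⁻¹ * u) ^ 3 / 3) := by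
      linear_combination (-(F⁻¹ * u) ^ 3 / 3) * hcube - (u ^ 3 / 3) * hFi
    rw [hlim]
    refine h.congr' ?_
    filter_upwards [hev] with T hT
    rw [OmegaV_sub hb0 hb1 hq0 hκ hT]
    -- Reassociate so that both sides contain the same logarithms.
    rw [show F⁻¹ * T ^ (-(1 : ℝ) / 3) * u = F⁻¹ * u * T ^ (-(1 : ℝ) / 3) by ring,
      ← mul_assoc (b / (b + κ * (1 - b))) (F⁻¹ * u) (T ^ (-(1 : ℝ) / 3)),
      ← mul_assoc b (F⁻¹ * u) (T ^ (-(1 : ℝ) / 3))]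
    generalize T ^ (-(1 : ℝ) / 3) = s
    linear_combination (-T * (F⁻¹ * u * s)) * hlin + (T * (F⁻¹ * u * s) ^ 2 / 2) * hquad
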